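/- Let m be a natural number and let v : ℝ → ℝ be m-times continuously differentiable such that for every k ≤ m the iterated derivative v^{(k)} has at most polynomial growth. Then (1/m!)·∫_ℝ (v^{(m)}(t))² dN(0,1)(t) = ∑_{n=0}^∞ (C(n,m)/n!)·(∫_ℝ v(t)·He_n(t) dN(0,1)(t))², where C(n,m) is the binomial coefficient (equal to 0 when m > n). -/

import Mathlib

open MeasureTheory ProbabilityTheory Real Polynomial

/-!
Gaussian integration by parts moves a derivative off `v` and raises the degree of the Hermite
polynomial it is tested against, so the `n`-th Hermite coefficient of `v^(m)` is the `(n + m)`-th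
one of `v`. Parseval's identity for `v^(m)` in the basis `He_n / √(n!)` then becomes the claim
because `C(n + m, m) / (n + m)! = 1 / (m! n!)`.

The basis is complete because `exp (s|t|)` lies in `L²(N(0,1))` for every `s`: if `f ∈ L²` is
orthogonal to all polynomials, expanding the exponential shows that the Fourier transform of the
signed measure `f · N(0,1)` vanishes.
-/

theorem ae_eq_zero_of_integral_cexp_inner_eq_zero {E : Type*} [NormedAddCommGroup E]
    [InnerProductSpace ℝ E] [CompleteSpace E] [SecondCountableTopology E] [MeasurableSpace E]
    [BorelSpace E] {μ : Measure E} {f : E → ℝ} (hf : Integrable f μ)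
    (h : ∀ s : E, ∫ x, (f x : ℂ) * Complex.exp (inner ℝ x s * Complex.I) ∂μ = 0) :
    f =ᵐ[μ] 0 := by
  -- The finite measures `f⁺ μ` and `f⁻ μ` have the same characteristic function.
  have hpos := isFiniteMeasure_withDensity_ofReal hf.2
  have hneg := isFiniteMeasure_withDensity_ofReal hf.neg.2
  have charFun_withDensity {g : E → ℝ} (hg : Integrable g μ) (s : E) :
      charFun (μ.withDensity fun x => ENNReal.ofReal (g x)) s =
        ∫ x, (max (g x) 0) • Complex.exp (inner ℝ x s * Complex.I) ∂μ := by
    rw [charFun_apply, integral_withDensity_eq_integral_toReal_smul₀ (by fun_prop) (by simp)]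
    simp only [ENNReal.toReal_ofReal']
  have integrable_part {g : E → ℝ} (hg : Integrable g μ) (s : E) :
      Integrable (fun x => (max (g x) 0) • Complex.exp (inner ℝ x s * Complex.I)) μ :=
    hg.pos_part.smul_bdd 1 (by fun_prop) (.of_forall fun x => (Complex.norm_exp_ofReal_mul_I _).le)
  have parts_eq : (μ.withDensity fun x => ENNReal.ofReal (f x)) =
      μ.withDensity fun x => ENNReal.ofReal ((-f) x) := by
    refine Measure.ext_of_charFun (funext fun s => ?_)
    rw [charFun_withDensity hf, charFun_withDensity hf.neg, ← sub_eq_zero,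
      ← integral_sub (integrable_part hf s) (integrable_part hf.neg s), ← h s]
    simp [← sub_mul, ← Complex.ofReal_sub, max_zero_sub_max_neg_zero_eq_self]
  refine hf.ae_eq_of_withDensityᵥ_eq (integrable_zero E ℝ μ) ?_
  rw [withDensityᵥ_eq_withDensity_pos_part_sub_withDensity_neg_part hf, withDensityᵥ_zero,
    sub_eq_zero, Measure.toSignedMeasure_eq_toSignedMeasure_iff]
  exact parts_eq

theorem hasSum_integral_mul_cexp {μ : Measure ℝ} {f : ℝ → ℝ}
    (hf : ∀ s : ℝ, Integrable (fun t => f t * rexp (s * |t|)) μ) (z : ℂ) :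
    HasSum (fun n : ℕ => z ^ n / n.factorial * ↑(∫ t, f t * t ^ n ∂μ))
      (∫ t, (f t : ℂ) * Complex.exp (z * t) ∂μ) := by
  have hf_meas : AEStronglyMeasurable f μ := by simpa using (hf 0).aestronglyMeasurable
  have hasSum_exp (t : ℝ) : HasSum (fun n : ℕ => |f t| * ((‖z‖ * |t|) ^ n / n.factorial))
      (|f t| * rexp (‖z‖ * |t|)) := by
    rw [Real.exp_eq_exp_ℝ]
    exact (NormedSpace.expSeries_div_hasSum_exp (‖z‖ * |t|)).mul_left _
  have key := hasSum_integral_of_dominated_convergence (μ := μ)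
    (F := fun (n : ℕ) t => (f t : ℂ) * ((z * t) ^ n / n.factorial))
    (f := fun t => (f t : ℂ) * Complex.exp (z * t))
    (fun n t => |f t| * ((‖z‖ * |t|) ^ n / n.factorial))
    (fun n => by fun_prop)
    (fun n => .of_forall fun t => by simp)
    (.of_forall fun t => (hasSum_exp t).summable)
    (by simpa [fun t => (hasSum_exp t).tsum_eq, abs_mul] using (hf ‖z‖).abs)
    (.of_forall fun t => by
      rw [Complex.exp_eq_exp_ℂ]
      exact (NormedSpace.expSeries_div_hasSum_exp (z * t)).mul_left _)
  convert! key using 2 with n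
  rw [← integral_complex_ofReal, ← integral_const_mul]
  refine integral_congr_ae (.of_forall fun t => ?_)
  push_cast
  ring

theorem ae_eq_zero_of_integral_mul_pow_eq_zero {μ : Measure ℝ} {f : ℝ → ℝ}
    (hf : ∀ s : ℝ, Integrable (fun t => f t * rexp (s * |t|)) μ)
    (h : ∀ n : ℕ, ∫ t, f t * t ^ n ∂μ = 0) : f =ᵐ[μ] 0 := by
  refine ae_eq_zero_of_integral_cexp_inner_eq_zero (by simpa using hf 0) fun s => ?_
  have key := hasSum_integral_mul_cexp hf (s * Complex.I)
  simp only [h, Complex.ofReal_zero, mul_zero] at key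
  rw [← key.unique hasSum_zero]
  simp [mul_right_comm]

theorem memLp_exp_mul_abs_gaussianReal (μ : ℝ) (v : NNReal) (s : ℝ) {p : ENNReal} (hp : p ≠ ⊤) :
    MemLp (fun t => rexp (s * |t|)) p (gaussianReal μ v) := by
  rcases eq_or_ne p 0 with rfl | hp0
  · exact memLp_zero_iff_aestronglyMeasurable.2 (by fun_prop)
  rw [← integrable_norm_rpow_iff (by fun_prop) hp0 hp]
  convert! integrable_exp_mul_abs (X := id) (integrable_exp_mul_gaussianReal (p.toReal * s))
    (integrable_exp_mul_gaussianReal (-(p.toReal * s))) using 2 with t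
  rw [norm_of_nonneg (exp_pos _).le, ← Real.exp_mul]
  simp only [id]
  ring_nf

theorem memLp_gaussianReal_of_norm_le_mul_pow {F : Type*} [NormedAddCommGroup F] {f : ℝ → F}
    {μ : ℝ} {v : NNReal} (hf : AEStronglyMeasurable f (gaussianReal μ v)) {C : ℝ} {N : ℕ}
    (hfC : ∀ t, ‖f t‖ ≤ C * (1 + |t|) ^ N) {p : ENNReal} (hp : p ≠ ⊤) :
    MemLp f p (gaussianReal μ v) := by
  refine (memLp_exp_mul_abs_gaussianReal μ v N hp).of_le_mul (c := |C|) hf (.of_forall fun t => ?_)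
  calc ‖f t‖ ≤ |C| * (1 + |t|) ^ N := (hfC t).trans (by gcongr; exact le_abs_self C)
    _ ≤ |C| * rexp |t| ^ N := by gcongr; linarith [add_one_le_exp |t|]
    _ = |C| * ‖rexp (N * |t|)‖ := by rw [norm_of_nonneg (exp_pos _).le, exp_nat_mul]

theorem memLp_aeval_gaussianReal {R : Type*} [CommSemiring R] [Algebra R ℝ] (q : R[X])
    (μ : ℝ) (v : NNReal) {p : ENNReal} (hp : p ≠ ⊤) :
    MemLp (fun t : ℝ => aeval t q) p (gaussianReal μ v) := by
  simp only [aeval_eq_sum_range, Algebra.smul_def]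
  refine memLp_finsetSum _ fun n _ => MemLp.const_mul ?_ _
  refine memLp_gaussianReal_of_norm_le_mul_pow (C := 1) (N := n) (by fun_prop) (fun t => ?_) hp
  rw [norm_pow, one_mul, Real.norm_eq_abs]
  gcongr
  linarith

theorem hasDerivAt_gaussianPDFReal (μ : ℝ) (v : NNReal) (x : ℝ) :
    HasDerivAt (gaussianPDFReal μ v) (-((x - μ) / v) * gaussianPDFReal μ v x) x := by
  have hexp : HasDerivAt (fun t : ℝ => -(t - μ) ^ 2 / (2 * v)) (-((x - μ) / v)) x := by
    convert! ((((hasDerivAt_id x).sub_const μ).pow 2).neg.div_const (2 * (v : ℝ))) using 1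
    simp only [id]
    ring
  convert! hexp.exp.const_mul (√(2 * π * v))⁻¹ using 1
  rw [gaussianPDFReal]
  ring

theorem hasDerivAt_hermite_mul_gaussianPDFReal (n : ℕ) (t : ℝ) :
    HasDerivAt (fun x => aeval x (hermite n) * gaussianPDFReal 0 1 x)
      (-(aeval t (hermite (n + 1)) * gaussianPDFReal 0 1 t)) t := by
  convert! ((hermite n).hasDerivAt_aeval t).mul (hasDerivAt_gaussianPDFReal 0 1 t) using 1
  simp only [hermite_succ, map_sub, map_mul, aeval_X, NNReal.coe_one]
  ring

theorem integrable_gaussianReal_iff_integrable_mul_gaussianPDFReal {f : ℝ → ℝ} {μ : ℝ}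
    {v : NNReal} (hv : v ≠ 0) :
    Integrable f (gaussianReal μ v) ↔ Integrable fun t => f t * gaussianPDFReal μ v t := by
  rw [gaussianReal_of_var_ne_zero _ hv, integrable_withDensity_iff_integrable_smul'
    (measurable_gaussianPDF _ _) (ae_of_all _ fun _ => gaussianPDF_lt_top)]
  simp [mul_comm]

theorem integral_gaussianReal_eq_integral_mul {f : ℝ → ℝ} {μ : ℝ} {v : NNReal} (hv : v ≠ 0) :
    ∫ t, f t ∂gaussianReal μ v = ∫ t, f t * gaussianPDFReal μ v t := by
  simp only [integral_gaussianReal_eq_integral_smul hv, smul_eq_mul, mul_comm]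

theorem integral_deriv_mul_hermite {f f' : ℝ → ℝ} (hderiv : ∀ t, HasDerivAt f (f' t) t)
    (hf : MemLp f 2 (gaussianReal 0 1)) (hf' : MemLp f' 2 (gaussianReal 0 1)) (n : ℕ) :
    ∫ t, f' t * aeval t (hermite n) ∂gaussianReal 0 1 =
      ∫ t, f t * aeval t (hermite (n + 1)) ∂gaussianReal 0 1 := by
  have integrable_mul {g : ℝ → ℝ} (hg : MemLp g 2 (gaussianReal 0 1)) (k : ℕ) :
      Integrable fun t => g t * (aeval t (hermite k) * gaussianPDFReal 0 1 t) := by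
    simp only [← mul_assoc]
    exact (integrable_gaussianReal_iff_integrable_mul_gaussianPDFReal one_ne_zero).1 <|
      hg.integrable_mul (memLp_aeval_gaussianReal (p := 2) (hermite k) 0 1 ENNReal.ofNat_ne_top)
  have parts := integral_mul_deriv_eq_deriv_mul_of_integrable (fun t _ => hderiv t)
    (fun t _ => hasDerivAt_hermite_mul_gaussianPDFReal n t)
    (by simpa [Pi.mul_def] using (integrable_mul hf (n + 1)).neg)
    (integrable_mul hf' n) (integrable_mul hf n)
  simp only [mul_neg, integral_neg, neg_inj] at parts
  simp only [integral_gaussianReal_eq_integral_mul one_ne_zero, mul_assoc, parts]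

theorem integral_aeval_mul_hermite (p : ℤ[X]) (n : ℕ) :
    ∫ t : ℝ, aeval t p * aeval t (hermite n) ∂gaussianReal 0 1 =
      ∫ t, aeval t (derivative^[n] p) ∂gaussianReal 0 1 := by
  induction n generalizing p with
  | zero => simp
  | succ n ih =>
    rw [Function.iterate_succ_apply, ← ih]
    exact (integral_deriv_mul_hermite p.hasDerivAt_aeval
      (memLp_aeval_gaussianReal _ 0 1 ENNReal.ofNat_ne_top)
      (memLp_aeval_gaussianReal _ 0 1 ENNReal.ofNat_ne_top) n).symm

theorem iterate_derivative_hermite_self (n : ℕ) :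
    derivative^[n] (hermite n) = C (n.factorial : ℤ) := by
  have hdeg : (derivative^[n] (hermite n)).natDegree ≤ 0 := by
    simpa using natDegree_iterate_derivative (hermite n) n
  rw [eq_C_of_natDegree_le_zero hdeg, coeff_iterate_derivative]
  simp [Nat.descFactorial_self]

theorem integral_hermite_mul_hermite (m n : ℕ) :
    ∫ t : ℝ, aeval t (hermite m) * aeval t (hermite n) ∂gaussianReal 0 1 =
      if m = n then (n.factorial : ℝ) else 0 := by
  wlog hmn : m ≤ n generalizing m n
  · simp only [mul_comm (aeval _ (hermite m)), this n m (le_of_not_ge hmn)]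
    grind
  rw [integral_aeval_mul_hermite]
  rcases hmn.eq_or_lt with rfl | hlt
  · simp [iterate_derivative_hermite_self]
  · simp [iterate_derivative_eq_zero (p := hermite m) (by simpa using hlt), hlt.ne]

theorem span_range_hermite : Submodule.span ℤ (Set.range hermite) = ⊤ :=
  Polynomial.Sequence.span ⟨hermite, degree_hermite⟩ fun n => by simp

theorem ae_eq_zero_of_integral_mul_hermite_eq_zero {f : ℝ → ℝ} (hf : MemLp f 2 (gaussianReal 0 1))
    (h : ∀ n, ∫ t, f t * aeval t (hermite n) ∂gaussianReal 0 1 = 0) : f =ᵐ[gaussianReal 0 1] 0 := by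
  have hint (p : ℤ[X]) : Integrable (fun t => f t * aeval t p) (gaussianReal 0 1) :=
    hf.integrable_mul (memLp_aeval_gaussianReal (p := 2) p 0 1 ENNReal.ofNat_ne_top)
  have integral_mul_aeval (p : ℤ[X]) : ∫ t, f t * aeval t p ∂gaussianReal 0 1 = 0 := by
    have hp : p ∈ Submodule.span ℤ (Set.range hermite) := span_range_hermite ▸ Submodule.mem_top
    induction hp using Submodule.span_induction with
    | mem _ hx => obtain ⟨n, rfl⟩ := hx; exact h n
    | zero => simp
    | add p q _ _ hp hq => simp [mul_add, integral_add (hint p) (hint q), hp, hq]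
    | smul a p _ hp =>
      simp only [zsmul_eq_mul, map_mul, map_intCast, mul_left_comm (f _), integral_const_mul, hp,
        mul_zero]
  refine ae_eq_zero_of_integral_mul_pow_eq_zero (fun s => ?_) fun n => ?_
  · exact hf.integrable_mul (memLp_exp_mul_abs_gaussianReal (p := 2) 0 1 s ENNReal.ofNat_ne_top)
  · simpa using integral_mul_aeval (X ^ n)

theorem inner_toLp_toLp {α 𝕜 E : Type*} [MeasurableSpace α] {μ : Measure α} [RCLike 𝕜]
    [NormedAddCommGroup E] [InnerProductSpace 𝕜 E] {f g : α → E} (hf : MemLp f 2 μ)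
    (hg : MemLp g 2 μ) : inner 𝕜 (hf.toLp f) (hg.toLp g) = ∫ a, inner 𝕜 (f a) (g a) ∂μ := by
  rw [L2.inner_def]
  refine integral_congr_ae ?_
  filter_upwards [hf.coeFn_toLp, hg.coeFn_toLp] with a hfa hga
  rw [hfa, hga]

/-- The normalized Hermite polynomial `He_n / √(n!)` as an element of `L²(N(0,1))`; these are the
vectors of `hermiteBasis`. -/
noncomputable def hermiteLp (n : ℕ) : Lp ℝ 2 (gaussianReal 0 1) :=
  (√(n.factorial : ℝ))⁻¹ •
    (memLp_aeval_gaussianReal (hermite n) 0 1 ENNReal.ofNat_ne_top).toLp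
      fun t => aeval t (hermite n)

theorem inner_toLp_hermiteLp {f : ℝ → ℝ} (hf : MemLp f 2 (gaussianReal 0 1)) (n : ℕ) :
    inner ℝ (hf.toLp f) (hermiteLp n) =
      (√(n.factorial : ℝ))⁻¹ * ∫ t, f t * aeval t (hermite n) ∂gaussianReal 0 1 := by
  rw [hermiteLp, inner_smul_right, inner_toLp_toLp]
  simp only [RCLike.inner_apply, conj_trivial, mul_comm]

theorem orthonormal_hermiteLp : Orthonormal ℝ hermiteLp := by
  rw [orthonormal_iff_ite]
  intro m n
  rw [hermiteLp, inner_smul_left, inner_toLp_hermiteLp, integral_hermite_mul_hermite]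
  split_ifs with hmn
  · subst hmn
    have hpos : (0 : ℝ) < m.factorial := by positivity
    rw [conj_trivial, ← mul_assoc, ← mul_inv, mul_self_sqrt hpos.le, inv_mul_cancel₀ hpos.ne']
  · simp only [mul_zero]

theorem orthogonal_span_range_hermiteLp : (Submodule.span ℝ (Set.range hermiteLp))ᗮ = ⊥ := by
  refine (Submodule.eq_bot_iff _).2 fun f hf => ?_
  refine (Lp.eq_zero_iff_ae_eq_zero).2 <|
    ae_eq_zero_of_integral_mul_hermite_eq_zero (Lp.memLp f) fun n => ?_
  have hn : inner ℝ f (hermiteLp n) = 0 :=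
    (Submodule.mem_orthogonal' _ _).1 hf _ (Submodule.subset_span ⟨n, rfl⟩)
  rw [← Lp.toLp_coeFn f (Lp.memLp f), inner_toLp_hermiteLp] at hn
  exact (mul_eq_zero.1 hn).resolve_left (by positivity)

/-- The Hilbert basis of `L²(N(0,1))` formed by the normalized Hermite polynomials, in which
Parseval's identity is applied. -/
noncomputable def hermiteBasis : HilbertBasis ℕ ℝ (Lp ℝ 2 (gaussianReal 0 1)) :=
  .mkOfOrthogonalEqBot orthonormal_hermiteLp orthogonal_span_range_hermiteLp

theorem hasSum_sq_integral_mul_hermite {f : ℝ → ℝ} (hf : MemLp f 2 (gaussianReal 0 1)) :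
    HasSum (fun n => (∫ t, f t * aeval t (hermite n) ∂gaussianReal 0 1) ^ 2 / n.factorial)
      (∫ t, f t ^ 2 ∂gaussianReal 0 1) := by
  convert! hermiteBasis.hasSum_inner_mul_inner (hf.toLp f) (hf.toLp f) using 1
  · ext n
    rw [hermiteBasis, HilbertBasis.coe_mkOfOrthogonalEqBot, real_inner_comm (hf.toLp f),
      inner_toLp_hermiteLp, mul_mul_mul_comm, ← mul_inv, mul_self_sqrt (by positivity)]
    ring
  · simp only [inner_toLp_toLp, real_inner_self_eq_norm_sq, Real.norm_eq_abs, sq_abs]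

theorem integral_iteratedDeriv_mul_hermite {v : ℝ → ℝ} {m : ℕ}
    (hv : ∀ k < m, Differentiable ℝ (iteratedDeriv k v))
    (hv2 : ∀ k ≤ m, MemLp (iteratedDeriv k v) 2 (gaussianReal 0 1)) (n : ℕ) :
    ∫ t, iteratedDeriv m v t * aeval t (hermite n) ∂gaussianReal 0 1 =
      ∫ t, v t * aeval t (hermite (n + m)) ∂gaussianReal 0 1 := by
  induction m generalizing n with
  | zero => simp
  | succ m ih =>
    rw [show n + (m + 1) = n + 1 + m by omega,
      ← ih (fun k hk => hv k (by omega)) fun k hk => hv2 k (by omega)]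
    refine integral_deriv_mul_hermite (fun t => ?_) (hv2 m m.le_succ) (hv2 (m + 1) le_rfl) n
    rw [iteratedDeriv_succ]
    exact (hv m m.lt_succ_self t).hasDerivAt

theorem stmt_8_general {m : ℕ} {v : ℝ → ℝ} (hv : ∀ k < m, Differentiable ℝ (iteratedDeriv k v))
    (hv2 : ∀ k ≤ m, MemLp (iteratedDeriv k v) 2 (gaussianReal 0 1)) :
    HasSum
      (fun n : ℕ => ((n.choose m : ℝ) / n.factorial) *
        (∫ t, v t * aeval t (hermite n) ∂gaussianReal 0 1) ^ 2)
      ((1 / (m.factorial : ℝ)) * ∫ t, iteratedDeriv m v t ^ 2 ∂gaussianReal 0 1) := by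
  have choose_eq_zero (n : ℕ) (hn : n ∉ Set.range (· + m)) : n.choose m = 0 :=
    Nat.choose_eq_zero_of_lt (by_contra fun h => hn ⟨n - m, Nat.sub_add_cancel (not_lt.1 h)⟩)
  rw [← (add_left_injective m).hasSum_iff fun n hn => by simp [choose_eq_zero n hn]]
  convert! (hasSum_sq_integral_mul_hermite (hv2 m le_rfl)).mul_left (1 / (m.factorial : ℝ)) using 2
    with n
  simp only [Function.comp_apply]
  rw [integral_iteratedDeriv_mul_hermite hv hv2, ← Nat.choose_symm_add, Nat.cast_add_choose]
  field_simp

/-- Parseval identity for derivatives in the Hermite basis.  If `v : ℝ → ℝ` is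
`m`-times continuously differentiable with all derivatives of order `≤ m` of at most
polynomial growth, then `(1/m!) ∫ (v^{(m)})² dN(0,1) = ∑_{n} (C(n,m)/n!) (∫ v · He_n dN(0,1))²`,
where `He_n = Polynomial.hermite n` is the monic probabilists' Hermite polynomial and
`C(n,m) = Nat.choose n m` (which vanishes for `m > n`). -/
theorem stmt_8 (m : ℕ) (v : ℝ → ℝ) (hv : ContDiff ℝ m v)
    (hgrowth : ∀ k ≤ m, ∃ C : ℝ, 0 < C ∧ ∃ N : ℕ, ∀ t : ℝ,
      |iteratedDeriv k v t| ≤ C * (1 + |t|) ^ N) :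
    (1 / (m.factorial : ℝ)) * ∫ t : ℝ, (iteratedDeriv m v t) ^ 2 ∂(gaussianReal 0 1) =
      ∑' n : ℕ, ((n.choose m : ℝ) / (n.factorial : ℝ)) *
        (∫ t : ℝ, v t * Polynomial.aeval t (Polynomial.hermite n) ∂(gaussianReal 0 1)) ^ 2 := by
  refine (stmt_8_general (fun k hk => hv.differentiable_iteratedDeriv k (mod_cast hk))
    fun k hk => ?_).tsum_eq.symm
  obtain ⟨C, -, N, hC⟩ := hgrowth k hk
  exact memLp_gaussianReal_of_norm_le_mul_pow
    (hv.continuous_iteratedDeriv k (mod_cast hk)).aestronglyMeasurable hC ENNReal.ofNat_ne_top
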